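/- arXiv:2510.05456 — 2 statements merged into one kernel-verified Lean document; each statement's English description precedes it below -/
import Mathlib

section
/- Let t0 < t1 be reals, let ρ ≥ 1 be a natural number, let α_1, …, α_ρ : ℝ → ℝ be locally Lipschitz class K functions, and let h_0, …, h_{ρ-1} : ℝ → ℝ be functions differentiable on [t0, t1] satisfying the recursion h_i(t) = h_{i-1}'(t) + α_i(h_{i-1}(t)) for all i ∈ {1, …, ρ-1} and all t ∈ [t0, t1]. Suppose h_{ρ-1}'(t) + α_ρ(h_{ρ-1}(t)) ≥ 0 for all t ∈ [t0, t1], and h_i(t0) ≥ 0 for every i ∈ {0, …, ρ-1}. Then h_i(t) ≥ 0 for every i ∈ {0, …, ρ-1} and every t ∈ [t0, t1]. -/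
/-!
Where `h_i` is negative, so is `α_{i+1}(h_i)`, and the inequality `h_i' + α_{i+1}(h_i) ≥ 0` gives
`h_i' ≥ 0`: a function that starts nonnegative and cannot decrease while negative stays nonnegative.
Nonnegativity of `h_{i+1}` is exactly this inequality for `h_i`, so the conclusion propagates
downwards from the highest order.
-/

open Set

lemma le_image_of_deriv_right_nonneg_of_lt {a b c : ℝ} {f f' : ℝ → ℝ}
    (hf : ContinuousOn f (Icc a b))
    (hf' : ∀ x ∈ Ico a b, HasDerivWithinAt f (f' x) (Ici x) x)
    (ha : c ≤ f a) (hnonneg : ∀ x ∈ Ico a b, f x < c → 0 ≤ f' x) :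
    ∀ x ∈ Icc a b, c ≤ f x := by
  intro x hx
  have hpos : ∀ y, a ≤ y → 0 < 1 + (y - a) := fun y hy => by linarith
  -- The slope `ε` of the comparison line makes the inequality of derivatives strict at contact.
  have le_line : ∀ ε > 0, -f x ≤ -c + ε * (1 + (x - a)) := by
    intro ε hε
    refine image_le_of_deriv_right_lt_deriv_boundary (f := fun y => -f y) (f' := fun y => -f' y)
      (B := fun y => -c + ε * (1 + (y - a))) (B' := fun _ => ε) hf.neg
      (fun y hy => (hf' y hy).neg) (by linarith) (fun y => ?_) (fun y hy hcontact => ?_) hx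
    · simpa using ((((hasDerivAt_id y).sub_const a).const_add 1).const_mul ε).const_add (-c)
    · have hlt : f y < c := by linarith [mul_pos hε (hpos y hy.1)]
      linarith [hnonneg y hy hlt]
  refine le_of_forall_pos_le_add fun δ hδ => ?_
  have hle := le_line (δ / (1 + (x - a))) (div_pos hδ (hpos x hx.1))
  rw [div_mul_cancel₀ δ (hpos x hx.1).ne'] at hle
  linarith

lemma nonneg_of_deriv_right_add_comp_nonneg {a b : ℝ} {f f' α : ℝ → ℝ}
    (hα : ∀ x < 0, α x ≤ 0) (hf : ContinuousOn f (Icc a b))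
    (hf' : ∀ t ∈ Ico a b, HasDerivWithinAt f (f' t) (Ici t) t)
    (hbarrier : ∀ t ∈ Ico a b, 0 ≤ f' t + α (f t)) (ha : 0 ≤ f a) :
    ∀ t ∈ Icc a b, 0 ≤ f t :=
  le_image_of_deriv_right_nonneg_of_lt hf hf' ha fun t ht hneg => by
    linarith [hbarrier t ht, hα (f t) hneg]

lemma hasDerivWithinAt_Ici_of_differentiableOn_Icc {E : Type*} [NormedAddCommGroup E]
    [NormedSpace ℝ E] {a b t : ℝ} {f : ℝ → E} (hf : DifferentiableOn ℝ f (Icc a b))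
    (ht : t ∈ Ico a b) : HasDerivWithinAt f (derivWithin f (Icc a b) t) (Ici t) t :=
  (hf t (Ico_subset_Icc_self ht)).hasDerivWithinAt.mono_of_mem_nhdsWithin
    (Icc_mem_nhdsGE_of_mem ht)

theorem stmt_1_general {t0 t1 : ℝ} {ρ : ℕ} {α h h' : ℕ → ℝ → ℝ}
    (hα : ∀ i, 1 ≤ i → i ≤ ρ → ∀ x < 0, α i x ≤ 0)
    (hcont : ∀ i < ρ, ContinuousOn (h i) (Icc t0 t1))
    (hderiv : ∀ i < ρ, ∀ t ∈ Ico t0 t1, HasDerivWithinAt (h i) (h' i t) (Ici t) t)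
    (hrec : ∀ i, 1 ≤ i → i < ρ → ∀ t ∈ Ico t0 t1,
      h i t ≤ h' (i - 1) t + α i (h (i - 1) t))
    (htop : ∀ t ∈ Ico t0 t1, 0 ≤ h' (ρ - 1) t + α ρ (h (ρ - 1) t))
    (hinit : ∀ i < ρ, 0 ≤ h i t0) :
    ∀ i < ρ, ∀ t ∈ Icc t0 t1, 0 ≤ h i t := by
  have nonneg_of_barrier : ∀ i < ρ, (∀ t ∈ Ico t0 t1, 0 ≤ h' i t + α (i + 1) (h i t)) →
      ∀ t ∈ Icc t0 t1, 0 ≤ h i t := fun i hi hbarrier =>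
    nonneg_of_deriv_right_add_comp_nonneg (hα (i + 1) (by omega) hi) (hcont i hi) (hderiv i hi)
      hbarrier (hinit i hi)
  intro i hi
  obtain ⟨n, rfl⟩ := Nat.exists_eq_add_one_of_ne_zero (Nat.ne_zero_of_lt hi)
  induction Nat.le_of_lt_succ hi using Nat.decreasingInduction with
  | self => exact nonneg_of_barrier n hi htop
  | of_succ i hin ih =>
    have hin' : i + 1 < n + 1 := by omega
    exact nonneg_of_barrier i hi fun t ht =>
      (ih hin' t (Ico_subset_Icc_self ht)).trans (hrec (i + 1) (by omega) hin' t ht)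

/-- Trajectory-wise HOCBF theorem: with auxiliary functions
`h_i = h_{i-1}' + α_i ∘ h_{i-1}` (for `i ∈ {1,…,ρ-1}`), the highest-order barrier
inequality `h_{ρ-1}' + α_ρ(h_{ρ-1}) ≥ 0` together with `h_i(t0) ≥ 0` for all
`i ∈ {0,…,ρ-1}` forces `h_i(t) ≥ 0` on `[t0, t1]` for all such `i`. -/
theorem stmt_1 (t0 t1 : ℝ) (ht : t0 < t1) (ρ : ℕ) (hρ : 1 ≤ ρ)
    (α : ℕ → ℝ → ℝ) (h : ℕ → ℝ → ℝ)
    (hα : ∀ i, 1 ≤ i → i ≤ ρ →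
      Continuous (α i) ∧ StrictMono (α i) ∧ α i 0 = 0 ∧ LocallyLipschitz (α i))
    (hdiff : ∀ i < ρ, DifferentiableOn ℝ (h i) (Set.Icc t0 t1))
    (hrec : ∀ i, 1 ≤ i → i < ρ → ∀ t ∈ Set.Icc t0 t1,
      h i t = derivWithin (h (i - 1)) (Set.Icc t0 t1) t + α i (h (i - 1) t))
    (htop : ∀ t ∈ Set.Icc t0 t1,
      derivWithin (h (ρ - 1)) (Set.Icc t0 t1) t + α ρ (h (ρ - 1) t) ≥ 0)
    (hinit : ∀ i < ρ, h i t0 ≥ 0) :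
    ∀ i < ρ, ∀ t ∈ Set.Icc t0 t1, h i t ≥ 0 := by
  exact stmt_1_general
    (fun i hi hiρ x hx => (hα i hi hiρ).2.2.1 ▸ ((hα i hi hiρ).2.1 hx).le)
    (fun i hi => (hdiff i hi).continuousOn)
    (fun i hi _ ht' => hasDerivWithinAt_Ici_of_differentiableOn_Icc (hdiff i hi) ht')
    (fun i hi hiρ t ht' => (hrec i hi hiρ t (Ico_subset_Icc_self ht')).le)
    (fun t ht' => htop t (Ico_subset_Icc_self ht')) hinit
end

section
/- Let E = ℝⁿ (a real finite-dimensional inner product space), let f : E → E, let g : E → (ℝᵐ →ₗ E), let h : E → ℝ be differentiable, and let α : ℝ → ℝ be a locally Lipschitz class K function. Define H(z, u) = Dh(z)[f(z) + g(z)u] + α(h(z)), where Dh(z) denotes the Fréchet derivative of h at z. Fix a < b, a set R ⊆ E, a set Uadm ⊆ ℝᵐ, and u_k ∈ Uadm. Let x : [a, b] → E be differentiable with x'(t) = f(x(t)) + g(x(t))u_k for all t ∈ [a, b], and suppose x(t) ∈ R for all t ∈ [a, b]. Suppose the set { H(z, u) - H(x(a), u) : z ∈ R, u ∈ Uadm }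 is nonempty and bounded below with infimum φ, that H(x(a), u_k) + φ ≥ 0, and that h(x(a)) ≥ 0. Then h(x(t)) ≥ 0 for all t ∈ [a, b]. -/
/-!
The choice `z = x t`, `u = uk` in the infimum defining `φ` turns the inequality imposed at time `a`
into `H (x t) uk ≥ 0`, that is `(h ∘ x)' t ≥ -α (h (x t))`, for every `t`. As `α ≤ 0` on the
negative reals, `h ∘ x` has nonnegative derivative wherever it is negative, so it cannot become
negative when it starts from `h (x a) ≥ 0`.
-/

open Set

theorem image_le_of_deriv_right_le_deriv_boundary_of_lt {f f' B B' : ℝ → ℝ} {a b : ℝ}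
    (hf : ContinuousOn f (Icc a b))
    (hf' : ∀ t ∈ Ico a b, HasDerivWithinAt f (f' t) (Ici t) t)
    (ha : f a ≤ B a) (hB : ContinuousOn B (Icc a b))
    (hB' : ∀ t ∈ Ico a b, HasDerivWithinAt B (B' t) (Ici t) t)
    (bound : ∀ t ∈ Ico a b, B t < f t → f' t ≤ B' t) :
    ∀ t ∈ Icc a b, f t ≤ B t := by
  -- Tilting the boundary makes every contact strict: there `f > B` and `f' ≤ B' < B' + ε`.
  have le_tilted (ε : ℝ) (hε : 0 < ε) : ∀ t ∈ Icc a b, f t ≤ B t + ε * (1 + (t - a)) := by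
    refine image_le_of_deriv_right_lt_deriv_boundary' (B' := fun t => B' t + ε) hf hf'
      (by linarith) (by fun_prop) (fun t ht => ?_) fun t ht contact => ?_
    · have tilt : HasDerivAt (fun s => ε * (1 + (s - a))) ε t := by
        simpa using (((hasDerivAt_id t).sub_const a).const_add 1).const_mul ε
      exact (hB' t ht).add tilt.hasDerivWithinAt
    · have tilt_pos : 0 < ε * (1 + (t - a)) := mul_pos hε (by linarith [ht.1])
      linarith [bound t ht (by linarith)]
  intro t ht
  have len_pos : 0 < 1 + (t - a) := by linarith [ht.1]
  refine le_of_forall_pos_le_add fun δ hδ => ?_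
  simpa only [div_mul_cancel₀ δ len_pos.ne'] using
    le_tilted (δ / (1 + (t - a))) (div_pos hδ len_pos) t ht

section BarrierMargin

variable {E U : Type*} [NormedAddCommGroup E] [NormedSpace ℝ E]

/-- The function `H` of the control barrier condition `H z u ≥ 0` for the system `ẋ = F x u`:
the rate of change of `h` at state `z` under input `u`, plus `α (h z)`. The rate is meaningful only
where `h` is differentiable, since `fderiv` is `0` elsewhere. -/
noncomputable def barrierMargin (F : E → U → E) (h : E → ℝ) (α : ℝ → ℝ) (z : E) (u : U) : ℝ :=
  fderiv ℝ h z (F z u) + α (h z)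

variable {F : E → U → E} {h : E → ℝ} {α : ℝ → ℝ} {a b : ℝ} {x : ℝ → E}

theorem nonneg_of_barrierMargin_nonneg {u : ℝ → U}
    (hα : ∀ y < 0, α y ≤ 0) (hx : ContinuousOn x (Icc a b))
    (hx' : ∀ t ∈ Ico a b, HasDerivWithinAt x (F (x t) (u t)) (Ici t) t)
    (hh : ∀ t ∈ Icc a b, DifferentiableAt ℝ h (x t))
    (margin_nonneg : ∀ t ∈ Ico a b, 0 ≤ barrierMargin F h α (x t) (u t))
    (hinit : 0 ≤ h (x a)) :
    ∀ t ∈ Icc a b, 0 ≤ h (x t) := by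
  have hcont : ContinuousOn (h ∘ x) (Icc a b) := fun t ht =>
    (hh t ht).continuousAt.comp_continuousWithinAt (hx t ht)
  have hderiv (t : ℝ) (ht : t ∈ Ico a b) :
      HasDerivWithinAt (h ∘ x) (fderiv ℝ h (x t) (F (x t) (u t))) (Ici t) t :=
    (hh t (Ico_subset_Icc_self ht)).hasFDerivAt.comp_hasDerivWithinAt t (hx' t ht)
  have deriv_nonneg (t : ℝ) (ht : t ∈ Ico a b) (hneg : h (x t) < 0) :
      0 ≤ fderiv ℝ h (x t) (F (x t) (u t)) := by
    have hmargin := margin_nonneg t ht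
    rw [barrierMargin] at hmargin
    linarith [hα _ hneg]
  exact image_le_of_deriv_right_le_deriv_boundary_of_lt continuousOn_const
    (fun t _ => hasDerivWithinAt_const t _ 0) hinit hcont hderiv deriv_nonneg

theorem stmt_3_general {R : Set E} {u : U} {φ : ℝ}
    (hα : ∀ y < 0, α y ≤ 0) (hh : ∀ z ∈ R, DifferentiableAt ℝ h z)
    (hx : ∀ t ∈ Icc a b, HasDerivWithinAt x (F (x t) u) (Icc a b) t)
    (hxR : ∀ t ∈ Icc a b, x t ∈ R)
    (hφ : ∀ z ∈ R, φ ≤ barrierMargin F h α z u - barrierMargin F h α (x a) u)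
    (hcond : 0 ≤ barrierMargin F h α (x a) u + φ) (hinit : 0 ≤ h (x a)) :
    ∀ t ∈ Icc a b, 0 ≤ h (x t) := by
  have hx_right (t : ℝ) (ht : t ∈ Ico a b) : HasDerivWithinAt x (F (x t) u) (Ici t) t :=
    (hx t (Ico_subset_Icc_self ht)).mono_of_mem_nhdsWithin (Icc_mem_nhdsGE_of_mem ht)
  have margin_nonneg (t : ℝ) (ht : t ∈ Ico a b) : 0 ≤ barrierMargin F h α (x t) u := by
    linarith [hφ (x t) (hxR t (Ico_subset_Icc_self ht))]
  exact nonneg_of_barrierMargin_nonneg (u := fun _ => u) hα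
    (fun t ht => (hx t ht).continuousWithinAt) hx_right (fun t ht => hh _ (hxR t ht))
    margin_nonneg hinit

end BarrierMargin

/-- Sampled-data CBF result for relative degree one: for the control-affine system
`ẋ = f(x) + g(x)u` with zero-order-hold input `u_k` on `[a, b]`, the compensated
barrier inequality at the sampling instant `a` keeps `h` nonnegative on `[a, b]`. -/
theorem stmt_3 {n m : ℕ}
    (f : EuclideanSpace ℝ (Fin n) → EuclideanSpace ℝ (Fin n))
    (g : EuclideanSpace ℝ (Fin n) →
      (EuclideanSpace ℝ (Fin m) →ₗ[ℝ] EuclideanSpace ℝ (Fin n)))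
    (h : EuclideanSpace ℝ (Fin n) → ℝ) (hdiff : Differentiable ℝ h)
    (α : ℝ → ℝ) (hα_cont : Continuous α) (hα_mono : StrictMono α) (hα_zero : α 0 = 0)
    (hα_lip : LocallyLipschitz α)
    (H : EuclideanSpace ℝ (Fin n) → EuclideanSpace ℝ (Fin m) → ℝ)
    (hH : ∀ z u, H z u = fderiv ℝ h z (f z + g z u) + α (h z))
    (a b : ℝ) (hab : a < b)
    (R : Set (EuclideanSpace ℝ (Fin n))) (Uadm : Set (EuclideanSpace ℝ (Fin m)))
    (uk : EuclideanSpace ℝ (Fin m)) (huk : uk ∈ Uadm)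
    (x : ℝ → EuclideanSpace ℝ (Fin n))
    (hx : ∀ t ∈ Set.Icc a b,
      HasDerivWithinAt x (f (x t) + g (x t) uk) (Set.Icc a b) t)
    (hxR : ∀ t ∈ Set.Icc a b, x t ∈ R)
    (Φ : Set ℝ) (hΦ : Φ = {d : ℝ | ∃ z ∈ R, ∃ u ∈ Uadm, d = H z u - H (x a) u})
    (hne : Φ.Nonempty) (hbdd : BddBelow Φ) (φ : ℝ) (hφ : φ = sInf Φ)
    (hcond : H (x a) uk + φ ≥ 0) (hinit : h (x a) ≥ 0) :
    ∀ t ∈ Set.Icc a b, h (x t) ≥ 0 := by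
  obtain rfl : H = barrierMargin (fun z u => f z + g z u) h α := funext₂ hH
  subst hφ hΦ
  exact stmt_3_general (fun y hy => (hα_mono hy).le.trans_eq hα_zero) (fun z _ => hdiff z) hx hxR
    (fun z hz => csInf_le hbdd ⟨z, hz, uk, huk, rfl⟩) hcond hinit
end
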